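/- arXiv:1804.01742 — 2 statements merged into one kernel-verified Lean document; each statement's English description precedes it below -/
import Mathlib

section
/- Let [a,b] ⊂ (0,1). If a + b ≤ 1, then inf_{t∈[a,b]} ∫ₐᵇ k₁(t,s) ds = a(b−a)(2−a−b)/2; if a + b > 1, then inf_{t∈[a,b]} ∫ₐᵇ k₁(t,s) ds = (1−b)(b²−a²)/2. -/
/-- Green's function for the Dirichlet problem on `[0,1]`. -/
noncomputable def k1 (t s : ℝ) : ℝ := if s ≤ t then s * (1 - t) else t * (1 - s)

/-!
For fixed `s` the kernel `k1 t s = min (s * (1 - t)) (t * (1 - s))` is concave in `t`, being a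
minimum of two affine functions. Hence `t ↦ ∫ s in a..b, k1 t s` is concave, and on `[a, b]` it
attains its minimum at an endpoint. There the integrand is a single affine function of `s`, and the
value at `b` exceeds the value at `a` by `(b - a) ^ 2 * (1 - a - b) / 2`, so the sign of `1 - a - b`
decides which endpoint is the minimizer.
-/

open MeasureTheory Set

theorem isLeast_image_Icc_of_concaveOn {𝕜 β : Type*} [Field 𝕜] [LinearOrder 𝕜]
    [IsStrictOrderedRing 𝕜] [AddCommGroup β] [LinearOrder β] [IsOrderedAddMonoid β] [Module 𝕜 β]
    [IsStrictOrderedModule 𝕜 β] {f : 𝕜 → β} {a b : 𝕜} (hab : a ≤ b)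
    (hf : ConcaveOn 𝕜 (Icc a b) f) :
    IsLeast (f '' Icc a b) (min (f a) (f b)) := by
  have ha : a ∈ Icc a b := left_mem_Icc.2 hab
  have hb : b ∈ Icc a b := right_mem_Icc.2 hab
  constructor
  · rcases min_choice (f a) (f b) with h | h
    · exact ⟨a, ha, h.symm⟩
    · exact ⟨b, hb, h.symm⟩
  · rintro _ ⟨t, ht, rfl⟩
    exact hf.min_le_of_mem_Icc ha hb ht

theorem k1_of_le {t s : ℝ} (h : s ≤ t) : k1 t s = s * (1 - t) :=
  if_pos h

theorem k1_of_ge {t s : ℝ} (h : t ≤ s) : k1 t s = t * (1 - s) := by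
  rcases h.eq_or_lt with rfl | h
  · exact k1_of_le le_rfl
  · exact if_neg h.not_ge

theorem k1_eq_min (t s : ℝ) : k1 t s = min (s * (1 - t)) (t * (1 - s)) := by
  rcases le_total s t with h | h
  · rw [k1_of_le h, min_eq_left (by linarith)]
  · rw [k1_of_ge h, min_eq_right (by linarith)]

theorem continuous_k1 (t : ℝ) : Continuous (k1 t) := by
  simp only [funext (k1_eq_min t)]
  fun_prop

theorem concaveOn_k1 (s : ℝ) : ConcaveOn ℝ univ (fun t => k1 t s) := by
  have h_left : ConcaveOn ℝ univ (fun t : ℝ => s * (1 - t)) := by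
    refine (((LinearMap.mulLeft ℝ (-s)).concaveOn convex_univ).add_const s).congr fun t _ => ?_
    change -s * t + s = s * (1 - t)
    ring
  have h_right : ConcaveOn ℝ univ (fun t : ℝ => t * (1 - s)) :=
    (LinearMap.mulRight ℝ (1 - s)).concaveOn convex_univ
  simpa only [k1_eq_min] using! h_left.inf h_right

theorem concaveOn_integral_k1 {μ : Measure ℝ} [IsLocallyFiniteMeasure μ] {a b : ℝ} (hab : a ≤ b) :
    ConcaveOn ℝ univ (fun t => ∫ s in a..b, k1 t s ∂μ) := by
  simp only [intervalIntegral.integral_of_le hab]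
  exact integral_concaveOn_of_integrand_ae convex_univ (.of_forall concaveOn_k1)
    fun t _ => ((continuous_k1 t).intervalIntegrable a b).1

theorem integral_k1_of_le_left {a b t : ℝ} (hab : a ≤ b) (ht : t ≤ a) :
    ∫ s in a..b, k1 t s = t * (b - a) * (2 - a - b) / 2 := by
  calc ∫ s in a..b, k1 t s = ∫ s in a..b, t * (1 - s) :=
        intervalIntegral.integral_congr fun s hs =>
          k1_of_ge (ht.trans (uIcc_of_le hab ▸ hs).1)
    _ = t * ((b - a) - (b ^ 2 - a ^ 2) / 2) := by
        rw [intervalIntegral.integral_const_mul, intervalIntegral.integral_sub (by simp) (by simp)]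
        simp
    _ = t * (b - a) * (2 - a - b) / 2 := by ring

theorem integral_k1_of_right_le {a b t : ℝ} (hab : a ≤ b) (ht : b ≤ t) :
    ∫ s in a..b, k1 t s = (1 - t) * (b ^ 2 - a ^ 2) / 2 := by
  calc ∫ s in a..b, k1 t s = ∫ s in a..b, s * (1 - t) :=
        intervalIntegral.integral_congr fun s hs =>
          k1_of_le ((uIcc_of_le hab ▸ hs).2.trans ht)
    _ = (b ^ 2 - a ^ 2) / 2 * (1 - t) := by simp
    _ = (1 - t) * (b ^ 2 - a ^ 2) / 2 := by ring

theorem isLeast_integral_k1 {a b : ℝ} (hab : a ≤ b) :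
    IsLeast ((fun t => ∫ s in a..b, k1 t s) '' Icc a b)
      (min (a * (b - a) * (2 - a - b) / 2) ((1 - b) * (b ^ 2 - a ^ 2) / 2)) := by
  have h_concave : ConcaveOn ℝ (Icc a b) (fun t => ∫ s in a..b, k1 t s) :=
    (concaveOn_integral_k1 hab).subset (subset_univ _) (convex_Icc a b)
  simpa only [integral_k1_of_le_left hab le_rfl, integral_k1_of_right_le hab le_rfl] using
    isLeast_image_Icc_of_concaveOn hab h_concave

theorem stmt9_general {a b : ℝ} (hab : a ≤ b) :
    (a + b ≤ 1 →
      IsLeast ((fun t => ∫ s in a..b, k1 t s) '' Icc a b) (a * (b - a) * (2 - a - b) / 2)) ∧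
    (1 ≤ a + b →
      IsLeast ((fun t => ∫ s in a..b, k1 t s) '' Icc a b) ((1 - b) * (b ^ 2 - a ^ 2) / 2)) := by
  have h_min := isLeast_integral_k1 hab
  have h_diff : (1 - b) * (b ^ 2 - a ^ 2) / 2 - a * (b - a) * (2 - a - b) / 2
      = (b - a) ^ 2 * (1 - (a + b)) / 2 := by ring
  constructor <;> intro h
  · have h_nonneg : 0 ≤ (b - a) ^ 2 * (1 - (a + b)) :=
      mul_nonneg (sq_nonneg _) (sub_nonneg.2 h)
    rwa [min_eq_left (by linarith)] at h_min
  · have h_nonpos : (b - a) ^ 2 * (1 - (a + b)) ≤ 0 :=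
      mul_nonpos_of_nonneg_of_nonpos (sq_nonneg _) (sub_nonpos.2 h)
    rwa [min_eq_right (by linarith)] at h_min

/-- Let `[a,b] ⊂ (0,1)`.  If `a + b ≤ 1` then
`inf_{t∈[a,b]} ∫ₐᵇ k₁(t,s) ds = a(b−a)(2−a−b)/2`; if `a + b > 1` then
`inf_{t∈[a,b]} ∫ₐᵇ k₁(t,s) ds = (1−b)(b²−a²)/2`. -/
theorem stmt9 (a b : ℝ) (ha : 0 < a) (hab : a < b) (hb : b < 1) :
    (a + b ≤ 1 →
      sInf ((fun t => ∫ s in a..b, k1 t s) '' Set.Icc a b)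
        = a * (b - a) * (2 - a - b) / 2) ∧
    (1 < a + b →
      sInf ((fun t => ∫ s in a..b, k1 t s) '' Set.Icc a b)
        = (1 - b) * (b ^ 2 - a ^ 2) / 2) :=
  (stmt9_general hab.le).imp (fun h hle => (h hle).csInf_eq) fun h hlt => (h hlt.le).csInf_eq
end

section
/- Let [a,b] ⊂ (0,1] and let h : [0,1] → [0,∞) be continuous. Define w(t) = ∫₀¹ k₂(t,s)·h(s) ds for t ∈ [0,1]. Then min_{t∈[a,b]} w(t) ≥ a · max_{t∈[0,1]} w(t). -/
/-- Green's function for the Robin problem on `[0,1]` (`k₂(t,s) = min{s,t}`). -/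
noncomputable def k2 (t s : ℝ) : ℝ := if s ≤ t then s else t

/-! For `0 ≤ a ≤ 1` and `a u ≤ t` the kernel satisfies `a k₂(u,s) = min{a s, a u} ≤ k₂(t,s)`.
Integrating against `h ≥ 0` gives `a w(u) ≤ w(t)` for all `t ∈ [a,b]` and `u ∈ [0,1]`; then take
the infimum over `t` and the supremum over `u`. -/

open MeasureTheory Set

theorem k2_eq_min (t s : ℝ) : k2 t s = min s t :=
  (min_def s t).symm

theorem mul_k2_le_k2 {a s t u : ℝ} (ha₀ : 0 ≤ a) (ha₁ : a ≤ 1) (hs : 0 ≤ s) (hut : a * u ≤ t) :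
    a * k2 u s ≤ k2 t s := by
  rw [k2_eq_min, k2_eq_min, mul_min_of_nonneg _ _ ha₀]
  exact min_le_min (mul_le_of_le_one_left hs ha₁) hut

theorem abs_k2_div_le_one {s t : ℝ} (hs : 0 < s) (ht : 0 ≤ t) : |k2 t s / s| ≤ 1 := by
  rw [k2_eq_min, abs_of_nonneg (div_nonneg (le_min hs.le ht) hs.le), div_le_one hs]
  exact min_le_left s t

section Integral

variable {ν : Measure ℝ} {h : ℝ → ℝ}

theorem integrable_k2_mul {t : ℝ} (hν : ∀ᵐ s ∂ν, 0 < s) (ht : 0 ≤ t)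
    (hint : Integrable (fun s ↦ s * h s) ν) : Integrable (fun s ↦ k2 t s * h s) ν := by
  have hmeas : Measurable fun s ↦ k2 t s / s := by
    simp only [k2_eq_min]
    fun_prop
  have hbound : ∀ᵐ s ∂ν, ‖k2 t s / s‖ ≤ 1 := hν.mono fun s hs ↦ abs_k2_div_le_one hs ht
  refine (hint.bdd_mul hmeas.aestronglyMeasurable hbound).congr ?_
  filter_upwards [hν] with s hs
  rw [← mul_assoc, div_mul_cancel₀ _ hs.ne']

theorem mul_integral_k2_mul_le {a t u : ℝ} (ha₀ : 0 ≤ a) (ha₁ : a ≤ 1) (hu : 0 ≤ u)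
    (hut : a * u ≤ t) (hν : ∀ᵐ s ∂ν, 0 < s) (hint : Integrable (fun s ↦ s * h s) ν)
    (hpos : ∀ᵐ s ∂ν, 0 ≤ h s) :
    a * ∫ s, k2 u s * h s ∂ν ≤ ∫ s, k2 t s * h s ∂ν := by
  have ht : 0 ≤ t := (mul_nonneg ha₀ hu).trans hut
  rw [← integral_const_mul]
  refine integral_mono_ae ((integrable_k2_mul hν hu hint).const_mul a)
    (integrable_k2_mul hν ht hint) ?_
  filter_upwards [hν, hpos] with s hs hs_nonneg
  rw [← mul_assoc]
  exact mul_le_mul_of_nonneg_right (mul_k2_le_k2 ha₀ ha₁ hs.le hut) hs_nonneg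

end Integral

theorem mul_sSup_le_sInf {a : ℝ} (ha : 0 ≤ a) {S T : Set ℝ} (hS : S.Nonempty) (hT : T.Nonempty)
    (hST : ∀ x ∈ S, ∀ y ∈ T, a * x ≤ y) : a * sSup S ≤ sInf T := by
  refine le_csInf hT fun y hy ↦ ?_
  rw [← smul_eq_mul, ← Real.sSup_smul_of_nonneg ha]
  refine csSup_le hS.smul_set ?_
  rintro _ ⟨x, hx, rfl⟩
  exact hST x hx y hy

-- Integrability of `s * h s` says that the integral defining `w 1` converges.
theorem stmt12_general {μ : Measure ℝ} {a b : ℝ} (ha : 0 ≤ a) (hab : a ≤ b) (hb : b ≤ 1)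
    {h : ℝ → ℝ} (hint : IntervalIntegrable (fun s ↦ s * h s) μ 0 1)
    (hpos : ∀ᵐ s ∂μ.restrict (Ioc 0 1), 0 ≤ h s)
    {w : ℝ → ℝ} (hw : ∀ t ∈ Icc (0 : ℝ) 1, w t = ∫ s in (0 : ℝ)..1, k2 t s * h s ∂μ) :
    a * sSup (w '' Icc 0 1) ≤ sInf (w '' Icc a b) := by
  refine mul_sSup_le_sInf ha ((nonempty_Icc.2 zero_le_one).image w)
    ((nonempty_Icc.2 hab).image w) ?_
  rintro _ ⟨u, hu, rfl⟩ _ ⟨t, ht, rfl⟩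
  have hut : a * u ≤ t := (mul_le_of_le_one_right ha hu.2).trans ht.1
  have hIoc : ∀ᵐ s ∂μ.restrict (Ioc 0 1), (0 : ℝ) < s :=
    ae_restrict_of_forall_mem measurableSet_Ioc fun s hs ↦ hs.1
  rw [hw u hu, hw t ⟨ha.trans ht.1, ht.2.trans hb⟩,
    intervalIntegral.integral_of_le zero_le_one, intervalIntegral.integral_of_le zero_le_one]
  exact mul_integral_k2_mul_le ha (hab.trans hb) hu.1 hut hIoc hint.1 hpos

/-- Let `[a,b] ⊂ (0,1]` and let `h : [0,1] → [0,∞)` be continuous.  If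
`w(t) = ∫₀¹ k₂(t,s)h(s) ds`, then `min_{t∈[a,b]} w(t) ≥ a·max_{t∈[0,1]} w(t)`. -/
theorem stmt12 (a b : ℝ) (ha : 0 < a) (hab : a < b) (hb : b ≤ 1)
    (h : ℝ → ℝ) (hcont : ContinuousOn h (Set.Icc 0 1))
    (hpos : ∀ t ∈ Set.Icc (0:ℝ) 1, 0 ≤ h t)
    (w : ℝ → ℝ) (hw : ∀ t ∈ Set.Icc (0:ℝ) 1, w t = ∫ s in (0:ℝ)..1, k2 t s * h s) :
    a * sSup (w '' Set.Icc (0:ℝ) 1) ≤ sInf (w '' Set.Icc a b) :=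
  stmt12_general ha.le hab.le hb
    ((continuousOn_id.mul hcont).intervalIntegrable_of_Icc zero_le_one)
    (ae_restrict_of_forall_mem measurableSet_Ioc fun s hs ↦ hpos s (Ioc_subset_Icc_self hs)) hw
end
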